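/- Let X ∈ ℝ^{n×d} with n ≥ d satisfy XᵀX = C_X² I_d for some C_X > 0, and suppose its i-th row x_i has Euclidean norm exactly C_X. Let σ > 0, k ≥ 1, set γ := (σ² + C_X²)/C_X², and let X' be obtained from X by replacing the row x_i with the zero vector. Then for every α ∈ (1, γ), D_α(M(X)‖M(X')) = φ(α; k, γ); i.e., the Rényi differential privacy bound φ of the Gaussian mixing mechanism is achieved with equality for such inputs. -/

import Mathlib

open MeasureTheory ProbabilityTheory Matrix

/-- Law of the Gaussian random matrix with i.i.d. standard Gaussian entries. -/
noncomputable def stdGaussMat (k n : ℕ) : Measure (Fin k → Fin n → ℝ) :=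
  Measure.pi fun _ => Measure.pi fun _ => gaussianReal 0 1

/-- The Gaussian mixing mechanism `M(X) = S X + σ ξ` with `S, ξ` independent
matrices of i.i.d. standard Gaussian entries: this is the law of the output. -/
noncomputable def gaussMix {n d : ℕ} (k : ℕ) (σ : ℝ) (X : Matrix (Fin n) (Fin d) ℝ) :
    Measure (Fin k → Fin d → ℝ) :=
  Measure.map (fun p => fun i j => (∑ l, p.1 i l * X l j) + σ * p.2 i j)
    ((stdGaussMat k n).prod (stdGaussMat k d))

/-- The `α`-Rényi divergence `D_α(P‖Q) = (α-1)⁻¹ log ∫ (dP/dQ)^α dQ`. -/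
noncomputable def renyiDiv {Ω : Type*} [MeasurableSpace Ω] (α : ℝ) (P Q : Measure Ω) : ℝ :=
  (α - 1)⁻¹ * Real.log (∫ x, ((P.rnDeriv Q) x).toReal ^ α ∂Q)

/-- The privacy curve `φ(α; k, ζ)`. -/
noncomputable def phi (α k ζ : ℝ) : ℝ :=
  k * α / (2 * (α - 1)) * Real.log (1 - 1 / ζ)
    - k / (2 * (α - 1)) * Real.log (1 - α / ζ)

/-- Minimal eigenvalue of a (Hermitian) real matrix. -/
noncomputable def lamMin {d : ℕ} (A : Matrix (Fin d) (Fin d) ℝ) : ℝ :=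
  if h : A.IsHermitian then ⨅ i, h.eigenvalues i else 0

/-!
The rows of `M(X)` are i.i.d. `N(0, A)` with `A = XᵀX + σ²I`, and zeroing the row `x = xᵢ` replaces
`A` by `A - xxᵀ`. Let `ζ⁻¹ = xᵀA⁻¹x` and `w = ζA⁻¹x`, so that `⟨w, x⟩ = 1`. The residual
`y - ⟨w, y⟩x` is independent of `⟨w, y⟩` and has the same law under both covariances, while the
variance of `⟨w, y⟩` drops from `ζ` to `ζ - 1`. Thus `⟨w, y⟩` is a sufficient statistic, and the
divergence is `k` times that of `N(0, ζ)` from `N(0, ζ - 1)`, which is a Gaussian integral.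
If `XᵀX = C²I` and `‖x‖ = C`, then `ζ = (σ² + C²)/C²`.
-/

open scoped ENNReal NNReal

section PushforwardAndProduct

lemma map_withDensity_comp {E F : Type*} [MeasurableSpace E] [MeasurableSpace F]
    (μ : Measure E) {T : E → F} (hT : Measurable T) {g : F → ℝ≥0∞} (hg : Measurable g) :
    (μ.withDensity (g ∘ T)).map T = (μ.map T).withDensity g := by
  ext s hs
  rw [Measure.map_apply hT hs, withDensity_apply _ (hT hs), withDensity_apply _ hs,
    setLIntegral_map hs hg hT]
  rfl

lemma pi_withDensity_ofReal {ι : Type*} [Fintype ι] {E : ι → Type*}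
    {mE : ∀ i, MeasurableSpace (E i)} (μ : ∀ i, Measure (E i)) [∀ i, SigmaFinite (μ i)]
    {f : ∀ i, E i → ℝ} (hf : ∀ i, Integrable (f i) (μ i)) (hf0 : ∀ i x, 0 ≤ f i x) :
    Measure.pi (fun i => (μ i).withDensity fun x => ENNReal.ofReal (f i x)) =
      (Measure.pi μ).withDensity fun x => ENNReal.ofReal (∏ i, f i (x i)) := by
  have (i : ι) : IsFiniteMeasure ((μ i).withDensity fun x => ENNReal.ofReal (f i x)) :=
    isFiniteMeasure_withDensity_ofReal (hf i).2
  refine Measure.pi_eq fun s hs => ?_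
  have hint : Integrable (fun x : ∀ i, E i => ∏ i, f i (x i))
      (Measure.pi fun i => (μ i).restrict (s i)) :=
    Integrable.fintype_prod_dep fun i => (hf i).restrict
  rw [withDensity_apply _ (MeasurableSet.univ_pi hs), Measure.restrict_pi_pi,
    ← ofReal_integral_eq_lintegral_ofReal hint
      (ae_of_all _ fun x => Finset.prod_nonneg fun i _ => hf0 i (x i)),
    integral_fintype_prod_eq_prod,
    ENNReal.ofReal_prod_of_nonneg fun i _ => integral_nonneg (hf0 i)]
  refine Finset.prod_congr rfl fun i _ => ?_
  rw [withDensity_apply _ (hs i), ofReal_integral_eq_lintegral_ofReal (hf i).restrict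
    (ae_of_all _ (hf0 i))]

lemma map_add_prod {E F G : Type*} [MeasurableSpace E] [MeasurableSpace F] [MeasurableSpace G]
    [AddMonoid G] [MeasurableAdd₂ G] (μ : Measure E) (ν : Measure F) [SFinite μ] [SFinite ν]
    {f : E → G} {g : F → G} (hf : Measurable f) (hg : Measurable g) :
    (μ.prod ν).map (fun p => f p.1 + g p.2) = μ.map f ∗ ν.map g := by
  rw [Measure.conv, Measure.map_prod_map μ ν hf hg, Measure.map_map (by fun_prop) (by fun_prop)]
  rfl

lemma map_pi_prod_pi {ι E F G : Type*} [Fintype ι] [MeasurableSpace E] [MeasurableSpace F]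
    [MeasurableSpace G] (μ : Measure E) (ν : Measure F) [IsFiniteMeasure μ] [IsFiniteMeasure ν]
    {T : E × F → G} (hT : Measurable T) :
    ((Measure.pi fun _ : ι => μ).prod (Measure.pi fun _ : ι => ν)).map
        (fun p i => T (p.1 i, p.2 i)) =
      Measure.pi fun _ : ι => (μ.prod ν).map T := by
  rw [← Measure.pi_map_pi fun _ => hT.aemeasurable,
    ← (measurePreserving_arrowProdEquivProdArrow E F ι (fun _ => μ) fun _ => ν).map_eq,
    Measure.map_map (by fun_prop) (by fun_prop)]
  rfl

end PushforwardAndProduct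

section RenyiDivergence

variable {Ω : Type*} [MeasurableSpace Ω]

lemma renyiDiv_withDensity (α : ℝ) (Q : Measure Ω) [SigmaFinite Q] {f : Ω → ℝ≥0∞}
    (hf : Measurable f) :
    renyiDiv α (Q.withDensity f) Q = (α - 1)⁻¹ * Real.log (∫ x, (f x).toReal ^ α ∂Q) := by
  rw [renyiDiv]
  congr 2
  refine integral_congr_ae ?_
  filter_upwards [Measure.rnDeriv_withDensity Q hf] with x hx
  rw [hx]

-- `s` is a sufficient statistic: the two images have the likelihood ratio `dp/dq ∘ s`.
lemma renyiDiv_map_prod {Ω₀ Θ : Type*} [MeasurableSpace Ω₀] [MeasurableSpace Θ] (α : ℝ)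
    (ρ : Measure Ω₀) [IsProbabilityMeasure ρ] {p q : Measure Θ} [IsFiniteMeasure p]
    [IsFiniteMeasure q] (hpq : p ≪ q) {T : Ω₀ × Θ → Ω} (hT : Measurable T) {s : Ω → Θ}
    (hs : Measurable s) (hsT : ∀ z, s (T z) = z.2) :
    renyiDiv α ((ρ.prod p).map T) ((ρ.prod q).map T) = renyiDiv α p q := by
  have hf : Measurable (p.rnDeriv q) := Measure.measurable_rnDeriv p q
  have hdensity : (ρ.prod p).map T = ((ρ.prod q).map T).withDensity (p.rnDeriv q ∘ s) := by
    rw [← map_withDensity_comp _ hT (hf.comp hs)]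
    have hcomp : (p.rnDeriv q ∘ s) ∘ T = fun z => p.rnDeriv q z.2 := by
      ext z
      simp only [Function.comp_apply, hsT]
    rw [hcomp, ← prod_withDensity_right hf, Measure.withDensity_rnDeriv_eq p q hpq]
  have hmeas : Measurable fun x => ((p.rnDeriv q ∘ s) x).toReal ^ α :=
    (hf.comp hs).ennreal_toReal.pow_const α
  rw [hdensity, renyiDiv_withDensity α _ (hf.comp hs), renyiDiv,
    integral_map hT.aemeasurable hmeas.aestronglyMeasurable]
  simp only [Function.comp_apply, hsT]
  rw [integral_fun_snd (fun a => (p.rnDeriv q a).toReal ^ α), probReal_univ, one_smul]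

lemma renyiDiv_pi {ι : Type*} [Fintype ι] (α : ℝ) {P Q : Measure Ω} [IsFiniteMeasure P]
    [IsFiniteMeasure Q] (hPQ : P ≪ Q) :
    renyiDiv α (Measure.pi fun _ : ι => P) (Measure.pi fun _ : ι => Q) =
      Fintype.card ι * renyiDiv α P Q := by
  set f : Ω → ℝ := fun x => (P.rnDeriv Q x).toReal
  have hf0 (x : Ω) : 0 ≤ f x := ENNReal.toReal_nonneg
  have hmeas : Measurable f := (Measure.measurable_rnDeriv P Q).ennreal_toReal
  have hP : Q.withDensity (fun x => ENNReal.ofReal (f x)) = P := by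
    conv_rhs => rw [← Measure.withDensity_rnDeriv_eq P Q hPQ]
    refine withDensity_congr_ae ?_
    filter_upwards [Measure.rnDeriv_lt_top P Q] with x hx
    exact ENNReal.ofReal_toReal hx.ne
  have hpi : Measure.pi (fun _ : ι => P) =
      (Measure.pi fun _ : ι => Q).withDensity fun x => ENNReal.ofReal (∏ i, f (x i)) := by
    rw [← pi_withDensity_ofReal (fun _ : ι => Q) (fun _ => Measure.integrable_toReal_rnDeriv)
      fun _ => hf0, hP]
  have hpow (x : ι → Ω) : (ENNReal.ofReal (∏ i, f (x i))).toReal ^ α = ∏ i, f (x i) ^ α := by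
    rw [ENNReal.toReal_ofReal (Finset.prod_nonneg fun i _ => hf0 (x i)),
      Real.finsetProd_rpow _ _ fun i _ => hf0 (x i)]
  rw [hpi, renyiDiv_withDensity α _ (by fun_prop)]
  simp_rw [hpow]
  rw [integral_fintype_prod_eq_pow (fun x => f x ^ α), Real.log_pow, renyiDiv]
  ring

end RenyiDivergence

section RealGaussian

variable {v₁ v₀ : ℝ≥0}

lemma gaussianReal_absolutelyContinuous_gaussianReal (m₁ m₀ : ℝ) (h₁ : v₁ ≠ 0) (h₀ : v₀ ≠ 0) :
    gaussianReal m₁ v₁ ≪ gaussianReal m₀ v₀ :=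
  (gaussianReal_absolutelyContinuous m₁ h₁).trans (gaussianReal_absolutelyContinuous' m₀ h₀)

lemma gaussianReal_eq_withDensity_gaussianPDF_div (m₁ m₀ : ℝ) (h₁ : v₁ ≠ 0) (h₀ : v₀ ≠ 0) :
    gaussianReal m₁ v₁ =
      (gaussianReal m₀ v₀).withDensity fun x => gaussianPDF m₁ v₁ x / gaussianPDF m₀ v₀ x := by
  rw [gaussianReal_of_var_ne_zero _ h₁, gaussianReal_of_var_ne_zero _ h₀,
    ← withDensity_mul _ (measurable_gaussianPDF _ _) (by fun_prop)]
  congr 1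
  ext x
  exact (ENNReal.mul_div_cancel (gaussianPDF_pos m₀ h₀ x).ne' gaussianPDF_lt_top.ne).symm

lemma gaussianPDFReal_zero_div (h₁ : v₁ ≠ 0) (h₀ : v₀ ≠ 0) (x : ℝ) :
    gaussianPDFReal 0 v₁ x / gaussianPDFReal 0 v₀ x =
      √(v₀ / v₁ : ℝ) * Real.exp (-((v₁ : ℝ)⁻¹ - (v₀ : ℝ)⁻¹) / 2 * x ^ 2) := by
  have : (0 : ℝ) < v₁ := by positivity
  have : (0 : ℝ) < v₀ := by positivity
  rw [gaussianPDFReal, gaussianPDFReal, mul_div_mul_comm, ← Real.exp_sub, inv_div_inv,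
    ← Real.sqrt_div (by positivity)]
  congr 2 <;> field_simp
  ring

lemma integral_gaussianPDFReal_zero_div_rpow (h₁ : v₁ ≠ 0) (h₀ : v₀ ≠ 0) (α : ℝ) :
    ∫ x, (gaussianPDFReal 0 v₁ x / gaussianPDFReal 0 v₀ x) ^ α ∂gaussianReal 0 v₀ =
      √(v₀ / v₁ : ℝ) ^ α * (√(1 - α * (1 - v₀ / v₁) : ℝ))⁻¹ := by
  have : (0 : ℝ) < v₁ := by positivity
  have : (0 : ℝ) < v₀ := by positivity
  set c : ℝ := 1 - α * (1 - v₀ / v₁) with hc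
  have hexponent (x : ℝ) :
      -(x - 0) ^ 2 / (2 * v₀) + -((v₁ : ℝ)⁻¹ - (v₀ : ℝ)⁻¹) / 2 * x ^ 2 * α =
        -(c / (2 * v₀)) * x ^ 2 := by
    rw [hc]
    field_simp
    ring
  have hintegrand (x : ℝ) :
      gaussianPDFReal 0 v₀ x • (gaussianPDFReal 0 v₁ x / gaussianPDFReal 0 v₀ x) ^ α =
        √(v₀ / v₁ : ℝ) ^ α * (√(2 * Real.pi * v₀))⁻¹ * Real.exp (-(c / (2 * v₀)) * x ^ 2) := by
    rw [gaussianPDFReal_zero_div h₁ h₀, Real.mul_rpow (by positivity) (by positivity),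
      ← Real.exp_mul, gaussianPDFReal, smul_eq_mul, ← hexponent, Real.exp_add]
    ring
  have hnormalization : (2 * Real.pi * v₀)⁻¹ * (Real.pi / (c / (2 * v₀))) = c⁻¹ := by
    field_simp
  rw [integral_gaussianReal_eq_integral_smul h₀]
  simp_rw [hintegrand]
  rw [integral_const_mul, integral_gaussian, mul_assoc, ← Real.sqrt_inv, ← Real.sqrt_inv,
    ← Real.sqrt_mul (by positivity), hnormalization]

lemma renyiDiv_gaussianReal_zero (h₁ : v₁ ≠ 0) (h₀ : v₀ ≠ 0) {α : ℝ}
    (hα : 0 < 1 - α * (1 - v₀ / v₁)) :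
    renyiDiv α (gaussianReal 0 v₁) (gaussianReal 0 v₀) =
      (α - 1)⁻¹ *
        (α / 2 * Real.log (v₀ / v₁) - 1 / 2 * Real.log (1 - α * (1 - v₀ / v₁))) := by
  have hratio : 0 < √(v₀ / v₁ : ℝ) := by positivity
  rw [gaussianReal_eq_withDensity_gaussianPDF_div 0 0 h₁ h₀,
    renyiDiv_withDensity α _ (by fun_prop)]
  simp_rw [ENNReal.toReal_div, toReal_gaussianPDF]
  rw [integral_gaussianPDFReal_zero_div_rpow h₁ h₀, Real.log_mul (by positivity) (by positivity),
    Real.log_rpow hratio, Real.log_inv, Real.log_sqrt (by positivity), Real.log_sqrt hα.le]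
  ring

end RealGaussian

section GaussianVector

lemma posSemidef_smul_vecMulVec_self {ι : Type*} [Finite ι] (v : ℝ≥0) (x : ι → ℝ) :
    ((v : ℝ) • vecMulVec x x).PosSemidef :=
  (posSemidef_vecMulVec_self_star x).smul v.coe_nonneg

variable {ι : Type*} [Fintype ι]

lemma posSemidef_mul_mul_transpose {κ : Type*} [Finite κ] {A : Matrix ι ι ℝ}
    (hA : A.PosSemidef) (B : Matrix κ ι ℝ) : (B * A * Bᵀ).PosSemidef := by
  simpa only [conjTranspose_eq_transpose_of_trivial] using hA.mul_mul_conjTranspose_same B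

lemma charFun_map_toLp (μ : Measure (ι → ℝ)) (t : EuclideanSpace ℝ ι) :
    charFun (μ.map (WithLp.toLp 2)) t = ∫ y, Complex.exp ((t ⬝ᵥ y : ℝ) * Complex.I) ∂μ := by
  rw [charFun_apply, integral_map (by fun_prop) (by fun_prop)]
  simp only [EuclideanSpace.inner_eq_star_dotProduct, star_trivial]

variable [DecidableEq ι]

/-- The centered Gaussian law with covariance matrix `A`, carried by plain coordinate vectors
rather than by `EuclideanSpace`. It is the Dirac mass at `0` if `A` is not positive
semidefinite. -/
noncomputable def centeredGaussian (A : Matrix ι ι ℝ) : Measure (ι → ℝ) :=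
  (multivariateGaussian 0 A).map WithLp.ofLp

instance isProbabilityMeasure_centeredGaussian (A : Matrix ι ι ℝ) :
    IsProbabilityMeasure (centeredGaussian A) :=
  Measure.isProbabilityMeasure_map (by fun_prop)

lemma centeredGaussian_map_toLp (A : Matrix ι ι ℝ) :
    (centeredGaussian A).map (WithLp.toLp 2) = multivariateGaussian 0 A := by
  rw [centeredGaussian, Measure.map_map (by fun_prop) (by fun_prop)]
  exact Measure.map_id

lemma integral_exp_dotProduct_centeredGaussian {A : Matrix ι ι ℝ} (hA : A.PosSemidef)
    (t : ι → ℝ) :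
    ∫ y, Complex.exp ((t ⬝ᵥ y : ℝ) * Complex.I) ∂centeredGaussian A =
      Complex.exp (-(t ⬝ᵥ A *ᵥ t / 2 : ℝ)) := by
  rw [← charFun_map_toLp _ (WithLp.toLp 2 t), centeredGaussian_map_toLp,
    charFun_multivariateGaussian hA]
  simp

lemma eq_centeredGaussian {A : Matrix ι ι ℝ} (hA : A.PosSemidef) {μ : Measure (ι → ℝ)}
    [IsFiniteMeasure μ]
    (hμ : ∀ t : ι → ℝ, ∫ y, Complex.exp ((t ⬝ᵥ y : ℝ) * Complex.I) ∂μ =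
      Complex.exp (-(t ⬝ᵥ A *ᵥ t / 2 : ℝ))) :
    μ = centeredGaussian A := by
  have hmap : μ.map (WithLp.toLp 2) = (centeredGaussian A).map (WithLp.toLp 2) := by
    refine Measure.ext_of_charFun (funext fun t => ?_)
    rw [charFun_map_toLp, charFun_map_toLp, hμ, integral_exp_dotProduct_centeredGaussian hA]
  exact (MeasurableEquiv.toLp 2 (ι → ℝ)).map_measurableEquiv_injective hmap

lemma centeredGaussian_one :
    centeredGaussian (1 : Matrix ι ι ℝ) = Measure.pi fun _ => gaussianReal 0 1 := by
  rw [centeredGaussian, multivariateGaussian_zero_one, ← map_pi_eq_stdGaussian,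
    Measure.map_map (by fun_prop) (by fun_prop)]
  exact Measure.map_id

lemma centeredGaussian_conv {A B : Matrix ι ι ℝ} (hA : A.PosSemidef) (hB : B.PosSemidef) :
    centeredGaussian A ∗ centeredGaussian B = centeredGaussian (A + B) := by
  refine eq_centeredGaussian (hA.add hB) fun t => ?_
  rw [Measure.conv, integral_map (by fun_prop) (by fun_prop)]
  simp only [dotProduct_add, Complex.ofReal_add, add_mul, Complex.exp_add]
  rw [integral_prod_mul (fun y => Complex.exp ((t ⬝ᵥ y : ℝ) * Complex.I))
      fun y => Complex.exp ((t ⬝ᵥ y : ℝ) * Complex.I),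
    integral_exp_dotProduct_centeredGaussian hA, integral_exp_dotProduct_centeredGaussian hB,
    ← Complex.exp_add, add_mulVec, dotProduct_add]
  congr 1
  push_cast
  ring

lemma centeredGaussian_map_mulVec {κ : Type*} [Fintype κ] [DecidableEq κ] {A : Matrix ι ι ℝ}
    (hA : A.PosSemidef) (B : Matrix κ ι ℝ) :
    (centeredGaussian A).map (B *ᵥ ·) = centeredGaussian (B * A * Bᵀ) := by
  refine eq_centeredGaussian (posSemidef_mul_mul_transpose hA B) fun t => ?_
  have hquadratic : t ⬝ᵥ (B * A * Bᵀ) *ᵥ t = (t ᵥ* B) ⬝ᵥ A *ᵥ (t ᵥ* B) := by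
    rw [← mulVec_mulVec, ← mulVec_mulVec, mulVec_transpose, dotProduct_mulVec]
  rw [integral_map (by fun_prop) (by fun_prop), hquadratic]
  simp only [dotProduct_mulVec t B]
  exact integral_exp_dotProduct_centeredGaussian hA _

lemma gaussianReal_map_smul (v : ℝ≥0) (x : ι → ℝ) :
    (gaussianReal 0 v).map (· • x) = centeredGaussian ((v : ℝ) • vecMulVec x x) := by
  refine eq_centeredGaussian (posSemidef_smul_vecMulVec_self v x) fun t => ?_
  have hquadratic : t ⬝ᵥ ((v : ℝ) • vecMulVec x x) *ᵥ t = v * (t ⬝ᵥ x) ^ 2 := by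
    rw [smul_mulVec, vecMulVec_mulVec, dotProduct_smul, dotProduct_comm x t]
    simp only [MulOpposite.smul_eq_mul_unop, MulOpposite.unop_op, dotProduct_smul, smul_eq_mul]
    ring
  rw [integral_map (by fun_prop) (by fun_prop), hquadratic]
  simp only [dotProduct_smul, smul_eq_mul, mul_comm _ (t ⬝ᵥ x), Complex.ofReal_mul]
  rw [← charFun_apply_real, charFun_gaussianReal]
  congr 1
  push_cast
  ring

end GaussianVector

section SpikedCovariance

variable {ι : Type*} [Fintype ι] [DecidableEq ι] {A : Matrix ι ι ℝ} {x w : ι → ℝ} {ζ : ℝ}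

lemma residual_conj (hA : A.PosSemidef) (hAw : A *ᵥ w = ζ • x) (hxw : x ⬝ᵥ w = 1) :
    (1 - vecMulVec x w) * A * (1 - vecMulVec x w)ᵀ = A - ζ • vecMulVec x x := by
  have hwA : w ᵥ* A = ζ • x := by
    rw [← mulVec_transpose, ← conjTranspose_eq_transpose_of_trivial, hA.isHermitian.eq, hAw]
  have hwAw : ζ • x ⬝ᵥ w = ζ := by rw [smul_dotProduct, hxw, smul_eq_mul, mul_one]
  rw [transpose_sub, transpose_one, transpose_vecMulVec, sub_mul, one_mul, vecMulVec_mul, hwA,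
    mul_sub, mul_one, sub_mul, mul_vecMulVec, hAw, vecMulVec_mul_vecMulVec, hwAw]
  simp only [smul_vecMulVec, vecMulVec_smul]
  abel

lemma centeredGaussian_add_smul_vecMulVec (hA : A.PosSemidef) (hAw : A *ᵥ w = ζ • x)
    (hxw : x ⬝ᵥ w = 1) (v : ℝ≥0) :
    centeredGaussian (A + ((v : ℝ) - ζ) • vecMulVec x x) =
      ((centeredGaussian A).prod (gaussianReal 0 v)).map
        fun z => (1 - vecMulVec x w) *ᵥ z.1 + z.2 • x := by
  rw [map_add_prod _ _ (f := ((1 - vecMulVec x w) *ᵥ ·)) (g := (· • x)) (by fun_prop)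
      (by fun_prop), centeredGaussian_map_mulVec hA, gaussianReal_map_smul,
    centeredGaussian_conv (posSemidef_mul_mul_transpose hA _)
      (posSemidef_smul_vecMulVec_self v x),
    residual_conj hA hAw hxw, sub_smul]
  congr 1
  abel

lemma dotProduct_residual_add_smul (hxw : x ⬝ᵥ w = 1) (y : ι → ℝ) (a : ℝ) :
    w ⬝ᵥ ((1 - vecMulVec x w) *ᵥ y + a • x) = a := by
  rw [dotProduct_add, sub_mulVec, one_mulVec, vecMulVec_mulVec, dotProduct_sub, dotProduct_smul,
    dotProduct_smul, dotProduct_comm w x, hxw]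
  simp

lemma centeredGaussian_spike_absolutelyContinuous (hA : A.PosSemidef) (hAw : A *ᵥ w = ζ • x)
    (hxw : x ⬝ᵥ w = 1) {v₁ v₀ : ℝ≥0} (h₁ : v₁ ≠ 0) (h₀ : v₀ ≠ 0) :
    centeredGaussian (A + (v₁ - ζ) • vecMulVec x x) ≪
      centeredGaussian (A + (v₀ - ζ) • vecMulVec x x) := by
  rw [centeredGaussian_add_smul_vecMulVec hA hAw hxw,
    centeredGaussian_add_smul_vecMulVec hA hAw hxw]
  exact (Measure.AbsolutelyContinuous.rfl.prod
    (gaussianReal_absolutelyContinuous_gaussianReal 0 0 h₁ h₀)).map (by fun_prop)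

lemma renyiDiv_centeredGaussian_spike (hA : A.PosSemidef) (hAw : A *ᵥ w = ζ • x)
    (hxw : x ⬝ᵥ w = 1) {v₁ v₀ : ℝ≥0} (h₁ : v₁ ≠ 0) (h₀ : v₀ ≠ 0) (α : ℝ) :
    renyiDiv α (centeredGaussian (A + (v₁ - ζ) • vecMulVec x x))
        (centeredGaussian (A + (v₀ - ζ) • vecMulVec x x)) =
      renyiDiv α (gaussianReal 0 v₁) (gaussianReal 0 v₀) := by
  rw [centeredGaussian_add_smul_vecMulVec hA hAw hxw,
    centeredGaussian_add_smul_vecMulVec hA hAw hxw]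
  exact renyiDiv_map_prod α _ (gaussianReal_absolutelyContinuous_gaussianReal 0 0 h₁ h₀)
    (by fun_prop) (s := (w ⬝ᵥ ·)) (by fun_prop)
    fun z => dotProduct_residual_add_smul hxw z.1 z.2

lemma renyiDiv_gaussianReal_sub_one {ζ : ℝ≥0} (hζ : 1 < ζ) {α : ℝ} (hα1 : α ≠ 1) (hα : α < ζ) :
    renyiDiv α (gaussianReal 0 ζ) (gaussianReal 0 (ζ - 1)) = phi α 1 ζ := by
  have hζ0 : (0 : ℝ) < ζ := by exact_mod_cast zero_lt_one.trans hζ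
  have hα1' : α - 1 ≠ 0 := sub_ne_zero.mpr hα1
  have hratio : ((ζ - 1 : ℝ≥0) : ℝ) / ζ = 1 - 1 / ζ := by
    rw [NNReal.coe_sub hζ.le, NNReal.coe_one, sub_div, div_self hζ0.ne']
  have hdiscount : 1 - α * (1 - (1 - 1 / ζ)) = 1 - α / (ζ : ℝ) := by ring
  have hpos : 0 < 1 - α / (ζ : ℝ) := sub_pos.mpr ((div_lt_one hζ0).mpr hα)
  rw [renyiDiv_gaussianReal_zero (zero_lt_one.trans hζ).ne' (tsub_pos_of_lt hζ).ne'
      (by rwa [hratio, hdiscount]), hratio, hdiscount, phi]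
  field_simp

lemma mul_phi_one (α k ζ : ℝ) : k * phi α 1 ζ = phi α k ζ := by
  rw [phi, phi]
  ring

lemma renyiDiv_pi_centeredGaussian_sub_vecMulVec {m : Type*} [Fintype m] (hA : A.PosSemidef)
    (hAw : A *ᵥ w = ζ • x) (hxw : x ⬝ᵥ w = 1) (hζ : 1 < ζ) {α : ℝ} (hα1 : α ≠ 1) (hα : α < ζ) :
    renyiDiv α (Measure.pi fun _ : m => centeredGaussian A)
        (Measure.pi fun _ : m => centeredGaussian (A - vecMulVec x x)) =
      phi α (Fintype.card m) ζ := by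
  lift ζ to ℝ≥0 using by linarith
  have hζ' : 1 < ζ := by exact_mod_cast hζ
  have h₁ : ζ ≠ 0 := (zero_lt_one.trans hζ').ne'
  have h₀ : ζ - 1 ≠ 0 := (tsub_pos_of_lt hζ').ne'
  have hA₁ : A + ((ζ : ℝ) - ζ) • vecMulVec x x = A := by
    rw [sub_self, zero_smul, add_zero]
  have hA₀ : A + (((ζ - 1 : ℝ≥0) : ℝ) - ζ) • vecMulVec x x = A - vecMulVec x x := by
    rw [NNReal.coe_sub hζ'.le, NNReal.coe_one, sub_sub_cancel_left, neg_one_smul, sub_eq_add_neg]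
  have hac := centeredGaussian_spike_absolutelyContinuous hA hAw hxw h₁ h₀
  have hrow := renyiDiv_centeredGaussian_spike hA hAw hxw h₁ h₀ α
  rw [hA₁, hA₀] at hac hrow
  rw [renyiDiv_pi α hac, hrow, renyiDiv_gaussianReal_sub_one hζ' hα1 hα, mul_phi_one]

end SpikedCovariance

section RowCovariance

variable {m ι : Type*} [Fintype m] [DecidableEq ι]

/-- The common covariance matrix `XᵀX + σ²I` of the rows of `M(X)`. -/
noncomputable def rowCov (σ : ℝ) (X : Matrix m ι ℝ) : Matrix ι ι ℝ :=
  Xᵀ * X + σ ^ 2 • (1 : Matrix ι ι ℝ)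

lemma transpose_mul_self_updateRow_zero [DecidableEq m] {n R : Type*} [CommRing R]
    (X : Matrix m n R) (i : m) :
    (X.updateRow i 0)ᵀ * X.updateRow i 0 = Xᵀ * X - vecMulVec (X i) (X i) := by
  have hterm (a b : n) (j : m) : X.updateRow i 0 j a * X.updateRow i 0 j b =
      X j a * X j b - if j = i then X i a * X i b else 0 := by
    rcases eq_or_ne j i with rfl | hj
    · simp
    · simp [hj]
  ext a b
  simp only [mul_apply, transpose_apply, hterm, Finset.sum_sub_distrib, Finset.sum_ite_eq',
    Finset.mem_univ, if_true, Matrix.sub_apply, vecMulVec_apply]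

lemma rowCov_updateRow_zero [DecidableEq m] (σ : ℝ) (X : Matrix m ι ℝ) (i : m) :
    rowCov σ (X.updateRow i 0) = rowCov σ X - vecMulVec (X i) (X i) := by
  rw [rowCov, rowCov, transpose_mul_self_updateRow_zero, sub_add_eq_add_sub]

lemma posDef_rowCov [Finite ι] (X : Matrix m ι ℝ) {σ : ℝ} (hσ : σ ≠ 0) : (rowCov σ X).PosDef := by
  have hX : (Xᵀ * X).PosSemidef := by
    simpa only [conjTranspose_eq_transpose_of_trivial] using posSemidef_conjTranspose_mul_self X
  exact PosDef.posSemidef_add hX (PosDef.one.smul (by positivity))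

variable [Fintype ι]

/-- The ridge leverage score `xᵢᵀ (XᵀX + σ²I)⁻¹ xᵢ` of the `i`-th row of `X`. Its inverse is the
parameter `ζ` of the privacy curve for the removal of that row. -/
noncomputable def ridgeLeverage (σ : ℝ) (X : Matrix m ι ℝ) (i : m) : ℝ :=
  X i ⬝ᵥ (rowCov σ X)⁻¹ *ᵥ X i

lemma rowCov_dotProduct_mulVec (σ : ℝ) (X : Matrix m ι ℝ) (u : ι → ℝ) :
    u ⬝ᵥ rowCov σ X *ᵥ u = X *ᵥ u ⬝ᵥ X *ᵥ u + σ ^ 2 * (u ⬝ᵥ u) := by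
  rw [rowCov, add_mulVec, dotProduct_add, ← mulVec_mulVec, dotProduct_mulVec, vecMul_transpose,
    smul_mulVec, one_mulVec, dotProduct_smul, smul_eq_mul]

variable {σ : ℝ} {X : Matrix m ι ℝ} {i : m}

lemma rowCov_mulVec_inv_mulVec (hσ : σ ≠ 0) (x : ι → ℝ) :
    rowCov σ X *ᵥ ((rowCov σ X)⁻¹ *ᵥ x) = x := by
  rw [mulVec_mulVec, mul_nonsing_inv _ (posDef_rowCov X hσ).det_pos.ne'.isUnit, one_mulVec]

lemma ridgeLeverage_pos (hσ : σ ≠ 0) (hi : X i ≠ 0) : 0 < ridgeLeverage σ X i :=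
  (posDef_rowCov X hσ).inv.dotProduct_mulVec_pos hi

lemma ridgeLeverage_lt_one (hσ : σ ≠ 0) (hi : X i ≠ 0) : ridgeLeverage σ X i < 1 := by
  set u := (rowCov σ X)⁻¹ *ᵥ X i
  have hu : rowCov σ X *ᵥ u = X i := rowCov_mulVec_inv_mulVec hσ _
  have hu0 : u ≠ 0 := fun h => hi (by rw [← hu, h, mulVec_zero])
  have hlev : ridgeLeverage σ X i = (X *ᵥ u) i := rfl
  have henergy : ridgeLeverage σ X i = X *ᵥ u ⬝ᵥ X *ᵥ u + σ ^ 2 * (u ⬝ᵥ u) := by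
    rw [← rowCov_dotProduct_mulVec, hu, dotProduct_comm, ridgeLeverage]
  have hsq : (X *ᵥ u) i * (X *ᵥ u) i ≤ X *ᵥ u ⬝ᵥ X *ᵥ u :=
    Finset.single_le_sum (f := fun j => (X *ᵥ u) j * (X *ᵥ u) j)
      (fun j _ => mul_self_nonneg _) (Finset.mem_univ i)
  have hnoise : 0 < σ ^ 2 * (u ⬝ᵥ u) := by
    have : 0 < u ⬝ᵥ u := dotProduct_star_self_pos_iff.mpr hu0
    positivity
  rw [← hlev] at hsq
  have hself : ridgeLeverage σ X i * ridgeLeverage σ X i < ridgeLeverage σ X i := by linarith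
  exact (mul_lt_iff_lt_one_left (ridgeLeverage_pos hσ hi)).mp hself

lemma ridgeLeverage_of_transpose_mul_self {c : ℝ} (hX : Xᵀ * X = c • (1 : Matrix ι ι ℝ))
    (hc : c + σ ^ 2 ≠ 0) (i : m) :
    ridgeLeverage σ X i = (X i ⬝ᵥ X i) / (c + σ ^ 2) := by
  have hinv : (rowCov σ X)⁻¹ = (c + σ ^ 2)⁻¹ • (1 : Matrix ι ι ℝ) := by
    refine inv_eq_right_inv ?_
    rw [rowCov, hX, ← add_smul, smul_mul_smul_comm, mul_inv_cancel₀ hc, one_smul, one_mul]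
  rw [ridgeLeverage, hinv, smul_mulVec, one_mulVec, dotProduct_smul, smul_eq_mul, inv_mul_eq_div]

end RowCovariance

lemma gaussMix_eq_pi {n d : ℕ} (k : ℕ) (σ : ℝ) (X : Matrix (Fin n) (Fin d) ℝ) :
    gaussMix k σ X = Measure.pi fun _ => centeredGaussian (rowCov σ X) := by
  have hmix : (fun (p : (Fin k → Fin n → ℝ) × (Fin k → Fin d → ℝ)) i j =>
      (∑ l, p.1 i l * X l j) + σ * p.2 i j) =
      fun p i => Xᵀ *ᵥ p.1 i + (σ • (1 : Matrix (Fin d) (Fin d) ℝ)) *ᵥ p.2 i := by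
    ext p i j
    rw [mulVec_transpose, smul_mulVec, one_mulVec]
    rfl
  rw [gaussMix, hmix, stdGaussMat, stdGaussMat,
    map_pi_prod_pi _ _ (T := fun z : (Fin n → ℝ) × (Fin d → ℝ) =>
      Xᵀ *ᵥ z.1 + (σ • (1 : Matrix (Fin d) (Fin d) ℝ)) *ᵥ z.2) (by fun_prop),
    map_add_prod _ _ (f := (Xᵀ *ᵥ ·)) (g := ((σ • (1 : Matrix (Fin d) (Fin d) ℝ)) *ᵥ ·))
      (by fun_prop) (by fun_prop), ← centeredGaussian_one, ← centeredGaussian_one,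
    centeredGaussian_map_mulVec .one, centeredGaussian_map_mulVec .one,
    centeredGaussian_conv (posSemidef_mul_mul_transpose .one _)
      (posSemidef_mul_mul_transpose .one _)]
  simp [rowCov, smul_smul, sq]

theorem gaussMix_renyiDiv_eq_phi_general {n d : ℕ} (X : Matrix (Fin n) (Fin d) ℝ) {σ : ℝ}
    (hσ : σ ≠ 0) (i : Fin n) (hi : X i ≠ 0) (k : ℕ) {α : ℝ} (hα1 : α ≠ 1)
    (hα : α < (ridgeLeverage σ X i)⁻¹) :
    renyiDiv α (gaussMix k σ X) (gaussMix k σ (X.updateRow i 0)) =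
      phi α k (ridgeLeverage σ X i)⁻¹ := by
  have hlev : 0 < ridgeLeverage σ X i := ridgeLeverage_pos hσ hi
  have hζ : 1 < (ridgeLeverage σ X i)⁻¹ := (one_lt_inv₀ hlev).mpr (ridgeLeverage_lt_one hσ hi)
  set w := (ridgeLeverage σ X i)⁻¹ • (rowCov σ X)⁻¹ *ᵥ X i with hw
  have hAw : rowCov σ X *ᵥ w = (ridgeLeverage σ X i)⁻¹ • X i := by
    rw [hw, mulVec_smul, rowCov_mulVec_inv_mulVec hσ]
  have hxw : X i ⬝ᵥ w = 1 := by
    rw [hw, dotProduct_smul, ← ridgeLeverage, smul_eq_mul, inv_mul_cancel₀ hlev.ne']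
  rw [gaussMix_eq_pi, gaussMix_eq_pi, rowCov_updateRow_zero,
    renyiDiv_pi_centeredGaussian_sub_vecMulVec (posDef_rowCov X hσ).posSemidef hAw hxw hζ hα1 hα,
    Fintype.card_fin]

/-- the Rényi-DP bound `φ` of the Gaussian mixing mechanism is achieved
with equality when `XᵀX = C_X² I` and the zeroed-out row has norm exactly `C_X`. -/
theorem gaussMix_renyiDiv_eq_phi {n d : ℕ} (hnd : d ≤ n)
    (X : Matrix (Fin n) (Fin d) ℝ) (CX σ γ : ℝ) (k : ℕ) (hk : 1 ≤ k)
    (hCX : 0 < CX)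
    (hXtX : Xᵀ * X = CX ^ 2 • (1 : Matrix (Fin d) (Fin d) ℝ))
    (i : Fin n) (hrow : Real.sqrt (∑ j, X i j ^ 2) = CX)
    (hσ : 0 < σ)
    (hγ : γ = (σ ^ 2 + CX ^ 2) / CX ^ 2)
    (X' : Matrix (Fin n) (Fin d) ℝ) (hX' : X' = X.updateRow i 0)
    (α : ℝ) (hα : α ∈ Set.Ioo 1 γ) :
    renyiDiv α (gaussMix k σ X) (gaussMix k σ X') = phi α k γ := by
  have hsq : X i ⬝ᵥ X i = CX ^ 2 := by
    rw [← hrow, Real.sq_sqrt (Finset.sum_nonneg fun j _ => sq_nonneg _)]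
    exact Finset.sum_congr rfl fun j _ => (sq (X i j)).symm
  have hi : X i ≠ 0 := fun h => hCX.ne' (by simpa [h] using hsq.symm)
  have hζ : (ridgeLeverage σ X i)⁻¹ = γ := by
    rw [ridgeLeverage_of_transpose_mul_self hXtX (by positivity), hsq, hγ, inv_div, add_comm]
  rw [hX', ← hζ]
  exact gaussMix_renyiDiv_eq_phi_general X hσ.ne' i hi k hα.1.ne' (hζ ▸ hα.2)
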